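/- arXiv:1009.5472 — 3 statements merged into one kernel-verified Lean document; each statement's English description precedes it below -/
import Mathlib

section
/- For every n ≥ 1 with M_n invertible, and every i with 0 ≤ i ≤ n−1, the pairing ⟨x^i, q_n(y)⟩ vanishes; explicitly, I i n − r_i ⬝ M_n⁻¹ ⬝ w_n = 0, where r_i is the row vector (I i 0, …, I i (n−1)) and w_n is the column vector with entries (w_n)_k = I (n−1−k) n for 0 ≤ k ≤ n−1. -/
section

open Matrix

theorem row_vecMul_of_mul_eq_one {m n R : Type*} [DecidableEq m] [Fintype n]
    [NonAssocSemiring R] {M : Matrix m n R} {N : Matrix n m R} (hMN : M * N = 1) (p : m) :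
    M.row p ᵥ* N = Pi.single p 1 :=
  calc
    M.row p ᵥ* N = (M * N).row p := (mul_apply_eq_vecMul M N p).symm
    _ = (1 : Matrix m m R).row p := by rw [hMN]
    _ = Pi.single p 1 := funext fun _ ↦ one_eq_pi_single

theorem pairing_xi_qn_eq_zero_general {R : Type*} [NonAssocRing R] (I : ℕ → ℕ → R) {n : ℕ}
    {M N : Matrix (Fin n) (Fin n) R}
    (hM : ∀ k j : Fin n, M k j = I (n - 1 - (k : ℕ)) (j : ℕ)) (hMN : M * N = 1)
    {i : ℕ} (hi : i < n) (m : ℕ) :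
    I i m - ∑ k : Fin n, ∑ j : Fin n, I i (k : ℕ) * N k j * I (n - 1 - (j : ℕ)) m = 0 := by
  -- `(I i 0, …, I i (n - 1))` is a row of `M`, so multiplying it by `N` gives a unit row vector,
  -- which selects the entry `I i m` of the column `w`.
  let p : Fin n := Fin.rev ⟨i, hi⟩
  have hp : n - 1 - (p : ℕ) = i := by
    simp only [p, Fin.val_rev]
    omega
  have hrow (k : Fin n) : M.row p k = I i k := by rw [row_apply, hM, hp]
  let w : Fin n → R := fun j ↦ I (n - 1 - (j : ℕ)) m
  rw [sub_eq_zero, eq_comm]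
  calc
    ∑ k : Fin n, ∑ j, I i (k : ℕ) * N k j * w j
      = ∑ j, (∑ k : Fin n, I i (k : ℕ) * N k j) * w j := by
        rw [Finset.sum_comm]
        simp only [Finset.sum_mul]
    _ = (M.row p ᵥ* N) ⬝ᵥ w := by simp only [dotProduct, vecMul, hrow]
    _ = w p := by rw [row_vecMul_of_mul_eq_one hMN, single_one_dotProduct]
    _ = I i m := congrArg (I · m) hp

end

/-- For `n ≥ 1` with the bimoment matrix `M_n` (entries `(M_n)_{k,j} = I (n-1-k) j`)
invertible (with two-sided inverse `N`), and `0 ≤ i ≤ n-1`, the pairing `⟨x^i, q_n(y)⟩`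
vanishes: `I i n - r_i ⬝ M_n⁻¹ ⬝ w_n = 0`, where `r_i = (I i 0, …, I i (n-1))` and
`(w_n)_k = I (n-1-k) n`. -/
theorem pairing_xi_qn_eq_zero {R : Type*} [DivisionRing R] (I : ℕ → ℕ → R)
    (n : ℕ) (hn : 1 ≤ n)
    (M N : Matrix (Fin n) (Fin n) R)
    (hM : ∀ k j : Fin n, M k j = I (n - 1 - (k : ℕ)) (j : ℕ))
    (hMN : M * N = 1) (hNM : N * M = 1)
    (i : ℕ) (hi : i ≤ n - 1) :
    I i n - ∑ k : Fin n, ∑ j : Fin n, I i (k : ℕ) * N k j * I (n - 1 - (j : ℕ)) n = 0 :=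
  pairing_xi_qn_eq_zero_general I hM hMN (Nat.lt_of_le_pred hn hi) n
end

section
/- For all n, m ∈ ℕ with n ≠ m, if M_n and M_m are invertible (vacuous when the index is 0), then ⟨p_n(x), q_m(y)⟩ = 0; explicitly, writing p_n(x) = ∑_{i=0}^{n} c_i x^i and q_m(y) = ∑_{j=0}^{m} y^j d_j for the coefficient sequences of the quasideterminant polynomials, one has ∑_{i=0}^{n} ∑_{j=0}^{m} c_i · I i j · d_j = 0. In other words, {p_n}, {q_m} is a monic biorthogonal system with respect to the bimoments I. -/
/-!
The equation `t M_n = u_n` says that `p_n` pairs to zero with each monomial `y^j`, `j < n`;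
dually, `M_m s = w_m` says that `q_m` pairs to zero with each monomial `x^i`, `i < m`.
If `m < n`, then `q_m` is a combination of the `y^j` with `j ≤ m < n`, so the pairing vanishes by
the first fact; if `n < m`, the second applies.
-/

section Bimoments

open Finset Matrix

variable {R : Type*}

/-- The bimoment matrix `M_n`. Row `k` holds the moments of `x^(n-1-k)`, so degrees in `x` decrease
downwards while degrees in `y` increase to the right. -/
def bimomentMatrix (I : ℕ → ℕ → R) (n : ℕ) : Matrix (Fin n) (Fin n) R :=
  of fun k j => I (n - 1 - k) j

/-- The row vector `u_n` of moments of `x^n` against `y^0, …, y^(n-1)`. -/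
def bimomentRow (I : ℕ → ℕ → R) (n : ℕ) : Fin n → R :=
  fun j => I n j

/-- The column vector `w_n` of moments of `x^(n-1), …, x^0` against `y^n`, listed in the order of
the rows of `bimomentMatrix`. -/
def bimomentCol (I : ℕ → ℕ → R) (n : ℕ) : Fin n → R :=
  fun k => I (n - 1 - k) n

section NonAssoc

variable [NonUnitalNonAssocSemiring R]

/-- The pairing of the left polynomial `∑ c_i x^i` of degree at most `n` with the right polynomial
`∑ y^j d_j` of degree at most `m`. Polynomials are encoded by coefficient sequences, whose entries
beyond the degree bounds are ignored. -/
def bimomentPairing (I : ℕ → ℕ → R) (n m : ℕ) (c d : ℕ → R) : R :=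
  ∑ i ∈ range (n + 1), ∑ j ∈ range (m + 1), c i * I i j * d j

theorem bimomentPairing_eq_zero_of_left {I : ℕ → ℕ → R} {n m : ℕ} {c : ℕ → R} (d : ℕ → R)
    (h : ∀ j ≤ m, ∑ i ∈ range (n + 1), c i * I i j = 0) : bimomentPairing I n m c d = 0 := by
  rw [bimomentPairing, sum_comm]
  refine sum_eq_zero fun j hj => ?_
  rw [← sum_mul, h j (mem_range_succ_iff.mp hj), zero_mul]

theorem sum_mul_bimoment_eq_vecMul (I : ℕ → ℕ → R) {n : ℕ} (c : ℕ → R) (j : Fin n) :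
    ∑ i ∈ range (n + 1), c i * I i j =
      ((fun k : Fin n => c (n - 1 - k)) ᵥ* bimomentMatrix I n) j + c n * bimomentRow I n j := by
  rw [sum_range_succ, ← sum_range_reflect, sum_range]
  rfl

theorem sum_bimoment_mul_eq_mulVec (I : ℕ → ℕ → R) {n : ℕ} (d : ℕ → R) (k : Fin n) :
    ∑ j ∈ range (n + 1), I (n - 1 - k) j * d j =
      (bimomentMatrix I n *ᵥ fun j : Fin n => d j) k + bimomentCol I n k * d n := by
  rw [sum_range_succ, sum_range]
  rfl

end NonAssoc

theorem bimomentPairing_eq_zero_of_right [NonUnitalSemiring R] {I : ℕ → ℕ → R} {n m : ℕ}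
    (c : ℕ → R) {d : ℕ → R} (h : ∀ i ≤ n, ∑ j ∈ range (m + 1), I i j * d j = 0) :
    bimomentPairing I n m c d = 0 := by
  refine sum_eq_zero fun i hi => ?_
  simp only [mul_assoc]
  rw [← mul_sum, h i (mem_range_succ_iff.mp hi), mul_zero]

variable [Ring R] {I : ℕ → ℕ → R} {n m : ℕ}

/-- The sequence `c` lists the coefficients of `p_n(x) = x^n - ∑ t_k x^(n-1-k)`, where `t = u_n N`
and `N` plays the role of `M_n⁻¹`. The coefficient of `x^i` is therefore the entry of `-t` at
`k = n - 1 - i`. -/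
structure IsLeftQuasidetPoly (I : ℕ → ℕ → R) (N : Matrix (Fin n) (Fin n) R) (c : ℕ → R) :
    Prop where
  leading : c n = 1
  coeff : ∀ i : Fin n, c i = -(bimomentRow I n ᵥ* N) ⟨n - 1 - i, by omega⟩

/-- The sequence `d` lists the coefficients of `q_n(y) = y^n - ∑ y^j s_j`, where `s = N w_n` and
`N` plays the role of `M_n⁻¹`. -/
structure IsRightQuasidetPoly (I : ℕ → ℕ → R) (N : Matrix (Fin n) (Fin n) R) (d : ℕ → R) :
    Prop where
  leading : d n = 1
  coeff : ∀ j : Fin n, d j = -(N *ᵥ bimomentCol I n) j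

variable {N : Matrix (Fin n) (Fin n) R}

theorem IsLeftQuasidetPoly.reverse_coeff {c : ℕ → R} (hc : IsLeftQuasidetPoly I N c) :
    (fun k : Fin n => c (n - 1 - k)) = -(bimomentRow I n ᵥ* N) := by
  funext k
  have hk : n - 1 - (n - 1 - (k : ℕ)) = k := Nat.sub_sub_self (by omega)
  simpa only [hk, Pi.neg_apply, Fin.eta] using hc.coeff ⟨n - 1 - k, by omega⟩

theorem IsLeftQuasidetPoly.sum_mul_bimoment_eq_zero {c : ℕ → R} (hc : IsLeftQuasidetPoly I N c)
    (hN : N * bimomentMatrix I n = 1) {j : ℕ} (hj : j < n) :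
    ∑ i ∈ range (n + 1), c i * I i j = 0 := by
  rw [sum_mul_bimoment_eq_vecMul I c ⟨j, hj⟩, hc.reverse_coeff, hc.leading, neg_vecMul,
    vecMul_vecMul, hN, vecMul_one, one_mul, Pi.neg_apply, neg_add_cancel]

theorem IsRightQuasidetPoly.sum_bimoment_mul_eq_zero {d : ℕ → R} (hd : IsRightQuasidetPoly I N d)
    (hN : bimomentMatrix I n * N = 1) {i : ℕ} (hi : i < n) :
    ∑ j ∈ range (n + 1), I i j * d j = 0 := by
  obtain ⟨k, rfl⟩ : ∃ k : Fin n, n - 1 - (k : ℕ) = i :=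
    ⟨⟨n - 1 - i, by omega⟩, Nat.sub_sub_self (by omega)⟩
  have hs : (fun j : Fin n => d j) = -(N *ᵥ bimomentCol I n) := funext hd.coeff
  rw [sum_bimoment_mul_eq_mulVec, hs, hd.leading, mulVec_neg, mulVec_mulVec, hN, one_mulVec,
    mul_one, Pi.neg_apply, neg_add_cancel]

theorem biorthogonal_system_general {Nn : Matrix (Fin n) (Fin n) R} {Nm : Matrix (Fin m) (Fin m) R}
    {c d : ℕ → R} (hc : IsLeftQuasidetPoly I Nn c) (hd : IsRightQuasidetPoly I Nm d)
    (hNn : Nn * bimomentMatrix I n = 1) (hNm : bimomentMatrix I m * Nm = 1) (hnm : n ≠ m) :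
    bimomentPairing I n m c d = 0 := by
  rcases hnm.lt_or_gt with hlt | hgt
  · exact bimomentPairing_eq_zero_of_right c fun i hi =>
      hd.sum_bimoment_mul_eq_zero hNm (hi.trans_lt hlt)
  · exact bimomentPairing_eq_zero_of_left d fun j hj =>
      hc.sum_mul_bimoment_eq_zero hNn (hj.trans_lt hgt)

end Bimoments

/-- For `n ≠ m`, with the bimoment matrices `M_n`, `M_m` invertible (vacuous when
the index is 0), the quasideterminant polynomials `p_n` and `q_m` pair to zero:
`∑_{i=0}^{n} ∑_{j=0}^{m} c_i * I i j * d_j = 0`, where `c` is the coefficient sequence of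
`p_n(x) = x^n - ∑_{k=0}^{n-1} t_k x^{n-1-k}` with `t = u_n M_n⁻¹`, and `d` is the coefficient
sequence of `q_m(y) = y^m - ∑_{j=0}^{m-1} y^j s_j` with `s = M_m⁻¹ w_m` (with `p_0 = q_0 = 1`).
That is, `{p_n}, {q_m}` is a monic biorthogonal system with respect to the bimoments `I`. -/
theorem biorthogonal_system {R : Type*} [DivisionRing R] (I : ℕ → ℕ → R)
    (n m : ℕ) (hnm : n ≠ m)
    (Mn Nn : Matrix (Fin n) (Fin n) R)
    (hMn : ∀ k j : Fin n, Mn k j = I (n - 1 - (k : ℕ)) (j : ℕ))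
    (hMNn : Mn * Nn = 1) (hNMn : Nn * Mn = 1)
    (Mm Nm : Matrix (Fin m) (Fin m) R)
    (hMm : ∀ k j : Fin m, Mm k j = I (m - 1 - (k : ℕ)) (j : ℕ))
    (hMNm : Mm * Nm = 1) (hNMm : Nm * Mm = 1)
    (c d : ℕ → R)
    (hc1 : c n = 1) (hc2 : ∀ i, n < i → c i = 0)
    (hc3 : ∀ i : Fin n, c (i : ℕ) =
      -(∑ j : Fin n, I n (j : ℕ) * Nn j ⟨n - 1 - (i : ℕ), by have := i.isLt; omega⟩))
    (hd1 : d m = 1) (hd2 : ∀ j, m < j → d j = 0)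
    (hd3 : ∀ j : Fin m, d (j : ℕ) =
      -(∑ k : Fin m, Nm j k * I (m - 1 - (k : ℕ)) m)) :
    ∑ i ∈ Finset.range (n + 1), ∑ j ∈ Finset.range (m + 1), c i * I i j * d j = 0 := by
  obtain rfl : Mn = bimomentMatrix I n := Matrix.ext hMn
  obtain rfl : Mm = bimomentMatrix I m := Matrix.ext hMm
  exact biorthogonal_system_general ⟨hc1, hc3⟩ ⟨hd1, hd3⟩ hNMn hMNm hnm
end

section
/- Let R be a division ring, n, m ∈ ℕ, π, η : ℕ → R with every π_k ≠ 0, and let X, Z : ℕ → ℕ → R be infinite matrices such that X_{k,l} = 0 whenever l > k + n, Z_{k,l} = 0 whenever k > l + m, and X_{k,l} + Z_{k,l} = π_k · η_l for all k, l. Define A_{k,l} = π_{k+1}⁻¹ · X_{k+1,l} − π_k⁻¹ · X_{k,l}. Then A_{k,l} = 0 unless −m ≤ (l : ℤ) − k ≤ n + 1; that is, A lies in the band [−m, n+1]. -/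
/-!
Dividing row `k` of the outer product `π k * η l` by `π k` makes all its rows equal to `η`, so
`Λ - Id`, the forward difference `Δ_[1]` in the row index, annihilates it and
`(Λ - Id) · D_π⁻¹ · X = -(Λ - Id) · D_π⁻¹ · Z`.
The left side inherits the upper band limit of `X`, raised by one because of the shift, and the
right side the lower band limit of `Z`.
-/

open Set fwdDiff

/-- The infinite matrix `A` is supported on the diagonals whose offset `l - k` lies in `s`.
The band `[a, b]` is `s = Icc a b`; half-bounded bands are `s = Iic b` and `s = Ici a`. -/
def IsBanded {M : Type*} [Zero M] (s : Set ℤ) (A : ℕ → ℕ → M) : Prop :=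
  ∀ k l : ℕ, A k l ≠ 0 → (l : ℤ) - k ∈ s

theorem isBanded_Iic_natCast_iff {M : Type*} [Zero M] {n : ℕ} {A : ℕ → ℕ → M} :
    IsBanded (Iic (n : ℤ)) A ↔ ∀ k l : ℕ, k + n < l → A k l = 0 := by
  refine forall₂_congr fun k l => ?_
  rw [mem_Iic, ← not_imp_not, not_not, not_le, lt_sub_iff_add_lt']
  norm_cast

theorem isBanded_Ici_neg_natCast_iff {M : Type*} [Zero M] {m : ℕ} {A : ℕ → ℕ → M} :
    IsBanded (Ici (-(m : ℤ))) A ↔ ∀ k l : ℕ, l + m < k → A k l = 0 := by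
  refine forall₂_congr fun k l => ?_
  rw [mem_Ici, ← not_imp_not, not_not, not_le, sub_lt_iff_lt_add, lt_neg_add_iff_add_lt, add_comm]
  norm_cast

namespace IsBanded

theorem inter {M : Type*} [Zero M] {s t : Set ℤ} {A : ℕ → ℕ → M}
    (hs : IsBanded s A) (ht : IsBanded t A) : IsBanded (s ∩ t) A :=
  fun k l hA => ⟨hs k l hA, ht k l hA⟩

theorem neg {M : Type*} [SubtractionMonoid M] {s : Set ℤ} {A : ℕ → ℕ → M}
    (hA : IsBanded s A) : IsBanded s (-A) :=
  fun k l h => hA k l (neg_ne_zero.mp h)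

theorem smul_rows {G M : Type*} [Zero M] [SMulZeroClass G M] {s : Set ℤ} {A : ℕ → ℕ → M}
    (hA : IsBanded s A) (g : ℕ → G) : IsBanded s (fun k => g k • A k) :=
  fun k l h => hA k l (right_ne_zero_of_smul h)

theorem fwdDiff {M : Type*} [AddCommGroup M] {s t : Set ℤ} {A : ℕ → ℕ → M}
    (hA : IsBanded s A) (hst : s ⊆ t) (hst_succ : ∀ d ∈ s, d + 1 ∈ t) :
    IsBanded t (Δ_[1] A) := by
  intro k l hdiff
  rcases (sub_ne_zero.mp hdiff).ne_or_ne 0 with hsucc | hk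
  · have hd := hst_succ _ (hA (k + 1) l hsucc)
    rwa [Nat.cast_add_one, sub_add_eq_sub_sub, sub_add_cancel] at hd
  · exact hst (hA k l hk)

end IsBanded

theorem fwdDiff_eq_neg_of_add_eq_const {M G : Type*} [AddCommMonoid M] [AddCommGroup G] {h : M}
    {f g : M → G} {c : G} (hfg : ∀ x, f x + g x = c) : Δ_[h] f = -Δ_[h] g := by
  rw [eq_neg_iff_add_eq_zero, ← fwdDiff_add, show f + g = fun _ => c from funext hfg]
  exact fwdDiff_const h c

theorem A_banded_general {G M : Type*} [Group G] [AddCommGroup M] [DistribMulAction G M] {a b : ℤ}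
    {π : ℕ → G} {η : ℕ → M} {X Z : ℕ → ℕ → M} (hX : IsBanded (Iic b) X) (hZ : IsBanded (Ici a) Z)
    (hXZ : ∀ k l, X k l + Z k l = π k • η l) :
    IsBanded (Icc a (b + 1)) (Δ_[1] fun k => (π k)⁻¹ • X k) := by
  have hsum : ∀ k, (π k)⁻¹ • X k + (π k)⁻¹ • Z k = η := fun k => by
    rw [← smul_add, inv_smul_eq_iff]
    exact funext (hXZ k)
  have hupper : IsBanded (Iic (b + 1)) (Δ_[1] fun k => (π k)⁻¹ • X k) :=
    (hX.smul_rows _).fwdDiff (Iic_subset_Iic.mpr (Int.le_add_one le_rfl))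
      fun _ hd => mem_Iic.mpr (add_le_add_left hd 1)
  have hlower : IsBanded (Ici a) (Δ_[1] fun k => (π k)⁻¹ • X k) := by
    rw [fwdDiff_eq_neg_of_add_eq_const hsum]
    exact ((hZ.smul_rows _).fwdDiff Subset.rfl fun _ hd => Int.le_add_one hd).neg
  exact hlower.inter hupper

/-- if `X` vanishes when `l > k + n`, `Z` vanishes when `k > l + m`, and
`X k l + Z k l = π k * η l` with every `π k ≠ 0`, then the matrix
`A k l = (π (k+1))⁻¹ * X (k+1) l - (π k)⁻¹ * X k l` (the entrywise form of
`(Λ - Id) · D_π⁻¹ · X`) lies in the band `[-m, n+1]`. -/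
theorem A_banded {R : Type*} [DivisionRing R] (n m : ℕ) (π η : ℕ → R)
    (hπ : ∀ k, π k ≠ 0)
    (X Z : ℕ → ℕ → R)
    (hX : ∀ k l : ℕ, k + n < l → X k l = 0)
    (hZ : ∀ k l : ℕ, l + m < k → Z k l = 0)
    (hXZ : ∀ k l : ℕ, X k l + Z k l = π k * η l) :
    ∀ k l : ℕ, (π (k + 1))⁻¹ * X (k + 1) l - (π k)⁻¹ * X k l ≠ 0 →
      -(m : ℤ) ≤ (l : ℤ) - k ∧ (l : ℤ) - k ≤ (n : ℤ) + 1 :=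
  A_banded_general (π := fun k => Units.mk0 (π k) (hπ k)) (isBanded_Iic_natCast_iff.mpr hX)
    (isBanded_Ici_neg_natCast_iff.mpr hZ) hXZ
end
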